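/- Fix δ ∈ (0,1) and set ζ = √(log(2/δ)/(2N)). Assume that if G⁻(λ) < ρ then λ < M. Let D_1, …, D_N be i.i.d. samples from G, let S_i = min(D_i, λ), and let Ĝ⁻(λ) = (1/N)·Σ_{i=1}^N 1{S_i < λ}. Define the algorithm output q_alg as follows: if Ĝ⁻(λ) ≥ ρ + ζ, set q_alg = inf{x ∈ ℝ : (1/N)·Σ_{i=1}^N 1{S_i ≤ x} ≥ ρ}; if Ĝ⁻(λ) < ρ − ζ, set q_alg = (bM + hλ − (b+h)·Ĝ⁻(λ)·M)/((b+h)·(1 − Ĝ⁻(λ))); otherwise set q_alg = λ. Then with probability at least 1 − 2δ, the worst-case regret of q_alg satisfies: Regret(q_alg) ≤ Δ + λ(b+h)ζ if G⁻(λ) ≥ ρ + 2ζ; Regret(q_alg) ≤ Δ + 2λ(b+h)ζ if ρ ≤ G⁻(λ) < ρ + 2ζ; Regret(q_alg) ≤ Δ + 2·max(b/h, 1)·(M − λ)·(b+h)·ζ if ρ − 2ζ ≤ G⁻(λ) < ρ; and Regret(q_alg) ≤ Δ + max(b/h, 1)·(M − λ)·(b+h)·ζ if G⁻(λ) < ρ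 − 2ζ. -/

import Mathlib

open MeasureTheory Set

/-- Newsvendor cost of ordering quantity `q` under demand distribution `F`,
with underage cost `b` and overage cost `h`. -/
noncomputable def nvCost (b h : ℝ) (F : Measure ℝ) (q : ℝ) : ℝ :=
  ∫ x, (b * max (x - q) 0 + h * max (q - x) 0) ∂F

/-- Optimal newsvendor quantity: the `ρ`-th quantile of `F`. -/
noncomputable def qStar (ρ : ℝ) (F : Measure ℝ) : ℝ :=
  sInf {q : ℝ | ρ ≤ (F (Iic q)).toReal}

/-- The set `𝒢` of admissible demand distributions: Borel probability measures on ℝ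
supported on `[0, ∞)` with finite mean and optimal newsvendor quantity at most `M`. -/
def GoodDist (ρ M : ℝ) : Set (Measure ℝ) :=
  {F | IsProbabilityMeasure F ∧ F (Iio 0) = 0 ∧ Integrable id F ∧ qStar ρ F ≤ M}

/-- The ambiguity set `𝒜_λ`: all admissible distributions agreeing with `G` before `lam`. -/
def Ambig (ρ M : ℝ) (G : Measure ℝ) (lam : ℝ) : Set (Measure ℝ) :=
  {F | F ∈ GoodDist ρ M ∧ ∀ x < lam, F (Iic x) = G (Iic x)}

/-- Worst-case regret of an ordering quantity `q` over the ambiguity set. -/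
noncomputable def Regret (b h ρ M : ℝ) (G : Measure ℝ) (lam q : ℝ) : ℝ :=
  sSup ((fun F => nvCost b h F q - nvCost b h F (qStar ρ F)) '' Ambig ρ M G lam)

/-- Minimax risk `Δ`. -/
noncomputable def Risk (b h ρ M : ℝ) (G : Measure ℝ) (lam : ℝ) : ℝ :=
  sInf (Regret b h ρ M G lam '' Icc 0 M)

/-- The unidentifiable ordering quantity `q†_G`. -/
noncomputable def qDagger (b h M : ℝ) (G : Measure ℝ) (lam : ℝ) : ℝ :=
  (b * M + h * lam - (b + h) * (G (Iio lam)).toReal * M) /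
    ((b + h) * (1 - (G (Iio lam)).toReal))

/-- The two-point-tail distribution `F_p`: agrees with `G` on `[0, λ)`, places an atom
of mass `p` at `λ` and an atom of mass `1 - p - G⁻(λ)` at `M`. -/
noncomputable def Fp (G : Measure ℝ) (lam M p : ℝ) : Measure ℝ :=
  G.restrict (Iio lam) + ENNReal.ofReal p • Measure.dirac lam +
    ENNReal.ofReal (1 - p - (G (Iio lam)).toReal) • Measure.dirac M

/-- The `N`-fold product (i.i.d.) measure of `G` (equal to `Measure.pi` whenever `G`
is sigma-finite, in particular for probability measures). -/
noncomputable def iidPi (N : ℕ) (G : Measure ℝ) : Measure (Fin N → ℝ) := by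
  classical
  exact if h : SigmaFinite G then
    haveI := h
    Measure.pi fun _ => G
  else 0

/-- Censored empirical estimate `Ĝ⁻(λ)` from censored samples `min (d i) lam`. -/
noncomputable def ghat (lam : ℝ) {N : ℕ} (d : Fin N → ℝ) : ℝ :=
  (1 / (N : ℝ)) * ∑ i, (if min (d i) lam < lam then (1 : ℝ) else 0)

/-- Output of the Robust Censored Newsvendor algorithm. -/
noncomputable def qalg (b h M lam ρ ζ : ℝ) {N : ℕ} (d : Fin N → ℝ) : ℝ :=
  if ρ + ζ ≤ ghat lam d then
    sInf {x : ℝ | ρ ≤ (1 / (N : ℝ)) * ∑ i, (if min (d i) lam ≤ x then (1 : ℝ) else 0)}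
  else if ghat lam d < ρ - ζ then
    (b * M + h * lam - (b + h) * ghat lam d * M) / ((b + h) * (1 - ghat lam d))
  else lam

/-- The regime-dependent regret bound of Theorem 4.1. -/
noncomputable def rcnBound (b h M lam ρ ζ gm : ℝ) : ℝ :=
  if ρ + 2 * ζ ≤ gm then lam * (b + h) * ζ
  else if ρ ≤ gm then 2 * lam * (b + h) * ζ
  else if ρ - 2 * ζ ≤ gm then 2 * max (b / h) 1 * (M - lam) * (b + h) * ζ
  else max (b / h) 1 * (M - lam) * (b + h) * ζ

/-!
A subgradient of the convex cost of `F` at `q` is `(b + h) (P_F(D ≤ q) - ρ)`, or the same with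
`D < q`. Bounding cost differences by it turns distances between distribution functions into regret.

If `G⁻(λ) ≥ ρ`, the optimal quantity of every `F` in the ambiguity set is at most `λ`, where `F` and
`G` agree, so any `q ≤ λ` that is a quantile of `G` up to level error `t` has regret at most
`λ (b + h) t`.

If `G⁻(λ) < ρ`, the worst demands move all the unobserved mass to `λ` or all of it to `M`. Hence for
`q ∈ [λ, M]` the regret is the maximum of two linear functions of `q`, which is minimal where they
cross. The crossing point computed from `γ` instead of `G⁻(λ)` loses at most
`(M - λ) (b + h) |γ - G⁻(λ)|`.

Hoeffding's inequality for four half-lines provides the required accuracy: two-sided for `D < λ`,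
and one-sided at the quantiles of `G` of levels `ρ ± ζ`. Each fails with probability at most
`δ / 2`.
-/

open ProbabilityTheory Filter Topology
open scoped ENNReal

section Quantile

variable {F : Measure ℝ} {t a x : ℝ}

lemma measureReal_Iio_le_of_forall_lt [IsFiniteMeasure F] (H : ∀ x < a, F.real (Iic x) ≤ t) :
    F.real (Iio a) ≤ t := by
  obtain ⟨u, hu_mono, hu_lt, hu_lim⟩ := exists_seq_strictMono_tendsto a
  have hlim : Tendsto (fun n => F (Iic (u n))) atTop (𝓝 (F (Iio a))) := by
    rw [← iUnion_Iic_eq_Iio_of_lt_of_tendsto hu_lt hu_lim]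
    exact tendsto_measure_iUnion_atTop fun _ _ hij => Iic_subset_Iic.2 (hu_mono.monotone hij)
  exact le_of_tendsto' ((ENNReal.tendsto_toReal (measure_ne_top F _)).comp hlim)
    fun n => H _ (hu_lt n)

lemma measureReal_Iio_eq_of_forall_lt {G : Measure ℝ} [IsFiniteMeasure F] [IsFiniteMeasure G]
    (H : ∀ x < a, F (Iic x) = G (Iic x)) : F.real (Iio a) = G.real (Iio a) := by
  have H' : ∀ x < a, F.real (Iic x) = G.real (Iic x) := fun x hx => congrArg ENNReal.toReal (H x hx)
  refine le_antisymm (measureReal_Iio_le_of_forall_lt fun x hx => ?_)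
    (measureReal_Iio_le_of_forall_lt fun x hx => ?_)
  · exact (H' x hx).trans_le (measureReal_mono (Iic_subset_Iio.2 hx))
  · exact (H' x hx).symm.trans_le (measureReal_mono (Iic_subset_Iio.2 hx))

variable [IsProbabilityMeasure F]

lemma bddBelow_setOf_le_measureReal_Iic (ht0 : 0 < t) : BddBelow {q | t ≤ F.real (Iic q)} := by
  obtain ⟨m, hm⟩ := ((tendsto_cdf_atBot F).eventually_lt_const ht0).exists
  refine ⟨m, fun q hq => le_of_lt ((cdf F).mono.reflect_lt (hm.trans_le ?_))⟩
  rw [cdf_eq_real]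
  exact hq

lemma nonempty_setOf_le_measureReal_Iic (ht1 : t < 1) : {q | t ≤ F.real (Iic q)}.Nonempty := by
  obtain ⟨m, hm⟩ := ((tendsto_cdf_atTop F).eventually_const_lt ht1).exists
  rw [cdf_eq_real] at hm
  exact ⟨m, hm.le⟩

lemma le_measureReal_Iic_qStar (ht1 : t < 1) : t ≤ F.real (Iic (qStar t F)) := by
  have hright : Tendsto (cdf F) (𝓝[>] qStar t F) (𝓝 (cdf F (qStar t F))) :=
    ((cdf F).right_continuous _).mono Ioi_subset_Ici_self
  rw [← cdf_eq_real]
  refine ge_of_tendsto hright ?_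
  filter_upwards [self_mem_nhdsWithin] with x hx
  obtain ⟨y, hy, hyx⟩ := exists_lt_of_csInf_lt (nonempty_setOf_le_measureReal_Iic ht1) hx
  rw [cdf_eq_real]
  exact le_trans hy (measureReal_mono (Iic_subset_Iic.2 hyx.le))

lemma qStar_le_iff (ht0 : 0 < t) (ht1 : t < 1) : qStar t F ≤ x ↔ t ≤ F.real (Iic x) :=
  ⟨fun hx => (le_measureReal_Iic_qStar ht1).trans (measureReal_mono (Iic_subset_Iic.2 hx)),
    fun hx => csInf_le (bddBelow_setOf_le_measureReal_Iic ht0) hx⟩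

lemma measureReal_Iio_qStar_le (ht0 : 0 < t) (ht1 : t < 1) : F.real (Iio (qStar t F)) ≤ t :=
  measureReal_Iio_le_of_forall_lt fun _ hx =>
    le_of_not_ge fun hle => hx.not_ge ((qStar_le_iff ht0 ht1).2 hle)

lemma le_qStar_of_measureReal_Iio_lt (ht1 : t < 1) (ha : F.real (Iio a) < t) : a ≤ qStar t F :=
  not_lt.1 fun hlt => ((le_measureReal_Iic_qStar ht1).trans
    (measureReal_mono (Iic_subset_Iio.2 hlt))).not_gt ha

lemma qStar_eq_of_measureReal (ht0 : 0 < t) (ht1 : t < 1) (hIio : F.real (Iio a) < t)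
    (hIic : t ≤ F.real (Iic a)) : qStar t F = a :=
  le_antisymm ((qStar_le_iff ht0 ht1).2 hIic) (le_qStar_of_measureReal_Iio_lt ht1 hIio)

lemma qStar_nonneg (ht0 : 0 < t) (ht1 : t < 1) (hF : F (Iio 0) = 0) : 0 ≤ qStar t F :=
  le_qStar_of_measureReal_Iio_lt ht1 (by simpa [Measure.real, hF] using ht0)

end Quantile

section Empirical

variable {ι Ω : Type*} [Fintype ι] [MeasurableSpace Ω]

/-- The empirical distribution of the sample `d`; the fractions of the sample in the definitions of
`ghat` and `qalg` are its values. It is the zero measure if the sample is empty. -/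
noncomputable def empMeasure (d : ι → Ω) : Measure Ω :=
  (Fintype.card ι : ℝ≥0∞)⁻¹ • ∑ i, Measure.dirac (d i)

lemma empMeasure_real_apply (d : ι → Ω) {A : Set Ω} (hA : MeasurableSet A) :
    (empMeasure d).real A = (Fintype.card ι : ℝ)⁻¹ * ∑ i, A.indicator 1 (d i) := by
  have hatom (x : Ω) : (Measure.dirac x A).toReal = A.indicator 1 x := by
    rw [Measure.dirac_apply' x hA]
    by_cases hx : x ∈ A <;> simp [hx]
  rw [measureReal_def, empMeasure, Measure.smul_apply, Measure.finsetSum_apply, smul_eq_mul,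
    ENNReal.toReal_mul, ENNReal.toReal_inv, ENNReal.toReal_natCast,
    ENNReal.toReal_sum fun i _ => measure_ne_top _ _]
  simp only [hatom]

lemma empMeasure_real_le {Ω' : Type*} [MeasurableSpace Ω'] {d : ι → Ω} {d' : ι → Ω'} {A : Set Ω}
    {A' : Set Ω'} (hA : MeasurableSet A) (hA' : MeasurableSet A') (H : ∀ i, d i ∈ A → d' i ∈ A') :
    (empMeasure d).real A ≤ (empMeasure d').real A' := by
  rw [empMeasure_real_apply d hA, empMeasure_real_apply d' hA']
  gcongr with i
  refine indicator_apply_le' (fun hi => ?_) fun _ => indicator_apply_nonneg fun _ => zero_le_one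
  rw [indicator_of_mem (H i hi), Pi.one_apply, Pi.one_apply]

instance [Nonempty ι] (d : ι → Ω) : IsProbabilityMeasure (empMeasure d) := by
  refine ⟨?_⟩
  simp only [empMeasure, Measure.smul_apply, Measure.finsetSum_apply, measure_univ,
    Finset.sum_const, Finset.card_univ, nsmul_eq_mul, mul_one, smul_eq_mul]
  exact ENNReal.inv_mul_cancel (by simp) (ENNReal.natCast_ne_top _)

end Empirical

section Concentration

variable {ι Ω : Type*} [Fintype ι] [Nonempty ι] [MeasurableSpace Ω] {ζ : ℝ}
  (G : Measure Ω) [IsProbabilityMeasure G]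

lemma measureReal_pi_empMeasure_ge_le {A : Set Ω} (hA : MeasurableSet A) (hζ : 0 ≤ ζ) :
    (Measure.pi fun _ : ι => G).real {d | G.real A + ζ ≤ (empMeasure d).real A} ≤
      Real.exp (-2 * Fintype.card ι * ζ ^ 2) := by
  have hcard : (0 : ℝ) < Fintype.card ι := Nat.cast_pos.2 Fintype.card_pos
  have hmeas : Measurable (A.indicator (1 : Ω → ℝ)) := measurable_one.indicator hA
  have hsubG : HasSubgaussianMGF (fun x => A.indicator 1 x - G.real A) ((‖(1 : ℝ) - 0‖₊ / 2) ^ 2)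
      G := by
    rw [← integral_indicator_one hA]
    refine hasSubgaussianMGF_of_mem_Icc hmeas.aemeasurable (ae_of_all _ fun x => ?_)
    exact ⟨indicator_apply_nonneg fun _ => zero_le_one,
      indicator_apply_le' (fun _ => le_rfl) fun _ => zero_le_one⟩
  have hsub (i : ι) : HasSubgaussianMGF (fun d : ι → Ω => A.indicator 1 (d i) - G.real A)
      ((‖(1 : ℝ) - 0‖₊ / 2) ^ 2) (Measure.pi fun _ : ι => G) := by
    have hmp := measurePreserving_eval (fun _ : ι => G) i
    exact HasSubgaussianMGF.of_map hmp.measurable.aemeasurable (by rwa [hmp.map_eq])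
  have hindep : iIndepFun (fun (i : ι) (d : ι → Ω) => A.indicator 1 (d i) - G.real A)
      (Measure.pi fun _ : ι => G) :=
    iIndepFun_pi fun _ => (hmeas.sub_const _).aemeasurable
  have hevent : {d : ι → Ω | G.real A + ζ ≤ (empMeasure d).real A} =
      {d | Fintype.card ι * ζ ≤ ∑ i, (A.indicator 1 (d i) - G.real A)} := by
    ext d
    rw [mem_ofPred_eq, mem_ofPred_eq, empMeasure_real_apply d hA, le_inv_mul_iff₀ hcard, mul_add,
      Finset.sum_sub_distrib, Finset.sum_const, Finset.card_univ, nsmul_eq_mul, le_sub_iff_add_le']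
  rw [hevent]
  refine (HasSubgaussianMGF.measure_sum_ge_le_of_iIndepFun hindep (fun i _ => hsub i)
    (by positivity)).trans_eq (congrArg Real.exp ?_)
  simp only [sub_zero, nnnorm_one, Finset.sum_const, Finset.card_univ, nsmul_eq_mul]
  push_cast
  field_simp

lemma one_sub_le_measureReal_pi_forall_empMeasure_lt {κ : Type*} [Fintype κ] {A : κ → Set Ω}
    (hA : ∀ k, MeasurableSet (A k)) (hζ : 0 ≤ ζ) :
    1 - Fintype.card κ * Real.exp (-2 * Fintype.card ι * ζ ^ 2) ≤
      (Measure.pi fun _ : ι => G).real {d | ∀ k, (empMeasure d).real (A k) < G.real (A k) + ζ} := by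
  set P := Measure.pi fun _ : ι => G
  have hcover : univ ⊆ {d : ι → Ω | ∀ k, (empMeasure d).real (A k) < G.real (A k) + ζ} ∪
      ⋃ k, {d | G.real (A k) + ζ ≤ (empMeasure d).real (A k)} := fun d _ => by
    simpa only [mem_union, mem_ofPred_eq, mem_iUnion, ← not_lt, ← not_forall] using em _
  have hunion := (measureReal_mono (μ := P) hcover).trans (measureReal_union_le _ _)
  have hbad : P.real (⋃ k, {d | G.real (A k) + ζ ≤ (empMeasure d).real (A k)}) ≤
      Fintype.card κ * Real.exp (-2 * Fintype.card ι * ζ ^ 2) :=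
    calc _ ≤ ∑ k, P.real {d | G.real (A k) + ζ ≤ (empMeasure d).real (A k)} :=
          measureReal_iUnion_fintype_le _
      _ ≤ ∑ _k : κ, Real.exp (-2 * Fintype.card ι * ζ ^ 2) :=
          Finset.sum_le_sum fun k _ => measureReal_pi_empMeasure_ge_le G (hA k) hζ
      _ = _ := by rw [Finset.sum_const, Finset.card_univ, nsmul_eq_mul]
  rw [probReal_univ] at hunion
  linarith

end Concentration

section Cost

variable {b h ρ q r : ℝ} {F : Measure ℝ}

/-- The newsvendor loss of ordering `q` when the realised demand is `x`; `nvCost` is its mean. -/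
noncomputable def nvLoss (b h q x : ℝ) : ℝ :=
  b * max (x - q) 0 + h * max (q - x) 0

lemma integrable_nvLoss [IsFiniteMeasure F] (hF : Integrable id F) :
    Integrable (nvLoss b h q) F := by
  have hover : Integrable (fun x : ℝ => x - q) F := hF.sub (integrable_const q)
  have hunder : Integrable (fun x : ℝ => q - x) F := (integrable_const q).sub hF
  exact (hover.pos_part.const_mul b).add (hunder.pos_part.const_mul h)

-- `nvLoss b h · x` is convex with a kink at `x`, where every value between the one-sided slopes
-- `-b` and `h` is a subgradient; this is why `q` may or may not belong to `A`.
lemma nvLoss_sub_le (hbh : 0 ≤ b + h) {A : Set ℝ} (hIio : Iio q ⊆ A) (hIic : A ⊆ Iic q) (x : ℝ) :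
    nvLoss b h q x - nvLoss b h r x ≤ (q - r) * ((b + h) * A.indicator 1 x - b) := by
  have hr : max (x - r) 0 = max (r - x) 0 + (x - r) := by grind
  have hq : max (x - q) 0 = max (q - x) 0 + (x - q) := by grind
  have hover : max (q - x) 0 - max (r - x) 0 ≤ (q - r) * A.indicator 1 x := by
    by_cases hx : x ∈ A
    · have hxq : x ≤ q := hIic hx
      rw [indicator_of_mem hx, Pi.one_apply, max_eq_left (sub_nonneg.2 hxq)]
      linarith [le_max_left (r - x) 0]
    · have hqx : q ≤ x := not_lt.1 fun hlt => hx (hIio hlt)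
      rw [indicator_of_notMem hx, max_eq_right (sub_nonpos.2 hqx)]
      linarith [le_max_right (r - x) 0]
  unfold nvLoss
  rw [hr, hq]
  linarith [mul_le_mul_of_nonneg_left hover hbh]

lemma critRatio_pos (hb : 0 < b) (hh : 0 < h) (hρ : ρ = b / (b + h)) : 0 < ρ := by
  rw [hρ]
  positivity

lemma critRatio_lt_one (hb : 0 < b) (hh : 0 < h) (hρ : ρ = b / (b + h)) : ρ < 1 := by
  rw [hρ, div_lt_one (by positivity)]
  exact lt_add_of_pos_right b hh

lemma add_mul_critRatio (hb : 0 < b) (hh : 0 < h) (hρ : ρ = b / (b + h)) : (b + h) * ρ = b := by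
  rw [hρ]
  exact mul_div_cancel₀ b (by positivity)

variable [IsProbabilityMeasure F] (hb : 0 < b) (hh : 0 < h) (hρ : ρ = b / (b + h))
include hb hh hρ

lemma nvCost_sub_le (hF : Integrable id F) {A : Set ℝ} (hA : MeasurableSet A) (hIio : Iio q ⊆ A)
    (hIic : A ⊆ Iic q) (r : ℝ) :
    nvCost b h F q - nvCost b h F r ≤ (b + h) * ((q - r) * (F.real A - ρ)) := by
  have hind : Integrable (A.indicator (1 : ℝ → ℝ)) F := (integrable_const 1).indicator hA
  calc nvCost b h F q - nvCost b h F r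
      = ∫ x, (nvLoss b h q x - nvLoss b h r x) ∂F :=
        (integral_sub (integrable_nvLoss hF) (integrable_nvLoss hF)).symm
    _ ≤ ∫ x, (q - r) * ((b + h) * A.indicator 1 x - b) ∂F :=
        integral_mono ((integrable_nvLoss hF).sub (integrable_nvLoss hF))
          (((hind.const_mul _).sub (integrable_const _)).const_mul _)
          (nvLoss_sub_le (by positivity) hIio hIic)
    _ = (q - r) * ((b + h) * F.real A - b) := by
        rw [integral_const_mul, integral_sub (hind.const_mul _) (integrable_const _),
          integral_const_mul, integral_indicator_one hA, integral_const, probReal_univ, one_smul]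
    _ = (b + h) * ((q - r) * (F.real A - ρ)) := by
        linear_combination (q - r) * add_mul_critRatio hb hh hρ

lemma nvCost_sub_le_Iic (hF : Integrable id F) (q r : ℝ) :
    nvCost b h F q - nvCost b h F r ≤ (b + h) * ((r - q) * (ρ - F.real (Iic q))) :=
  (nvCost_sub_le hb hh hρ hF measurableSet_Iic Iio_subset_Iic_self subset_rfl r).trans_eq (by ring)

lemma nvCost_sub_le_Iio (hF : Integrable id F) (q r : ℝ) :
    nvCost b h F q - nvCost b h F r ≤ (b + h) * ((q - r) * (F.real (Iio q) - ρ)) :=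
  nvCost_sub_le hb hh hρ hF measurableSet_Iio subset_rfl Iio_subset_Iic_self r

lemma nvCost_sub_le_mul_abs (hF : Integrable id F) (q r : ℝ) :
    nvCost b h F q - nvCost b h F r ≤ (b + h) * |q - r| := by
  have hslope : |F.real (Iio q) - ρ| ≤ 1 := by
    have hρ0 := critRatio_pos hb hh hρ
    have hρ1 := critRatio_lt_one hb hh hρ
    exact abs_le.2 ⟨by linarith [measureReal_nonneg (μ := F) (s := Iio q)],
      by linarith [measureReal_le_one (μ := F) (s := Iio q)]⟩
  calc nvCost b h F q - nvCost b h F r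
      ≤ (b + h) * ((q - r) * (F.real (Iio q) - ρ)) := nvCost_sub_le_Iio hb hh hρ hF q r
    _ ≤ (b + h) * (|q - r| * |F.real (Iio q) - ρ|) := by
        rw [← abs_mul]
        gcongr
        exact le_abs_self _
    _ ≤ (b + h) * |q - r| := by
        gcongr
        exact mul_le_of_le_one_right (abs_nonneg _) hslope

lemma nvCost_qStar_le (hF : Integrable id F) (q : ℝ) :
    nvCost b h F (qStar ρ F) ≤ nvCost b h F q := by
  have hρ0 := critRatio_pos hb hh hρ
  have hρ1 := critRatio_lt_one hb hh hρ
  rw [← sub_nonpos]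
  rcases le_total q (qStar ρ F) with hle | hle
  · refine (nvCost_sub_le_Iio hb hh hρ hF _ q).trans (mul_nonpos_of_nonneg_of_nonpos
      (by positivity) (mul_nonpos_of_nonneg_of_nonpos (sub_nonneg.2 hle) ?_))
    exact sub_nonpos.2 (measureReal_Iio_qStar_le hρ0 hρ1)
  · refine (nvCost_sub_le_Iic hb hh hρ hF _ q).trans (mul_nonpos_of_nonneg_of_nonpos
      (by positivity) (mul_nonpos_of_nonneg_of_nonpos (sub_nonneg.2 hle) ?_))
    exact sub_nonpos.2 (le_measureReal_Iic_qStar hρ1)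

end Cost

section Ambiguity

variable {ρ M lam p : ℝ} {F G : Measure ℝ}

lemma self_mem_ambig (hG : G ∈ GoodDist ρ M) : G ∈ Ambig ρ M G lam :=
  ⟨hG, fun _ _ => rfl⟩

lemma measureReal_Iio_eq_of_mem_ambig [IsFiniteMeasure G] (hF : F ∈ Ambig ρ M G lam) {x : ℝ}
    (hx : x ≤ lam) : F.real (Iio x) = G.real (Iio x) := by
  have := hF.1.1
  exact measureReal_Iio_eq_of_forall_lt fun y hy => hF.2 y (hy.trans_le hx)

lemma le_qStar_of_mem_ambig [IsFiniteMeasure G] (hρ1 : ρ < 1) (hg : G.real (Iio lam) < ρ)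
    (hF : F ∈ Ambig ρ M G lam) : lam ≤ qStar ρ F := by
  have := hF.1.1
  refine le_qStar_of_measureReal_Iio_lt hρ1 ?_
  rwa [measureReal_Iio_eq_of_mem_ambig hF le_rfl]

lemma boundary_le_of_mem_goodDist (hρ1 : ρ < 1) (hG : G ∈ GoodDist ρ M)
    (hg : G.real (Iio lam) < ρ) : lam ≤ M := by
  have := hG.1
  exact (le_qStar_of_measureReal_Iio_lt hρ1 hg).trans hG.2.2.2

lemma qStar_le_of_mem_ambig [IsFiniteMeasure G] (hρ0 : 0 < ρ) (hρ1 : ρ < 1)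
    (hg : ρ ≤ G.real (Iio lam)) (hF : F ∈ Ambig ρ M G lam) : qStar ρ F ≤ lam := by
  have := hF.1.1
  rw [← measureReal_Iio_eq_of_mem_ambig hF le_rfl] at hg
  exact (qStar_le_iff hρ0 hρ1).2 (hg.trans (measureReal_mono Iio_subset_Iic_self))

lemma Fp_real_apply [IsFiniteMeasure G] (hp0 : 0 ≤ p) (hp1 : p + G.real (Iio lam) ≤ 1) {s : Set ℝ}
    (hs : MeasurableSet s) :
    (Fp G lam M p).real s = G.real (s ∩ Iio lam) + p * s.indicator 1 lam +
      (1 - p - G.real (Iio lam)) * s.indicator 1 M := by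
  have htail : 0 ≤ 1 - p - (G (Iio lam)).toReal := by
    rw [← measureReal_def]
    linarith
  have hfin (c a : ℝ) : (ENNReal.ofReal c • Measure.dirac a) s ≠ ∞ := by
    have := (Measure.dirac a).smul_finite (c := ENNReal.ofReal c) ENNReal.ofReal_ne_top
    exact measure_ne_top _ s
  have hatom (a : ℝ) : (Measure.dirac a).real s = s.indicator 1 a := by
    rw [measureReal_def, Measure.dirac_apply' a hs]
    by_cases ha : a ∈ s <;> simp [ha]
  rw [Fp, measureReal_def, Measure.add_apply, Measure.add_apply, ENNReal.toReal_add
    (ENNReal.add_ne_top.2 ⟨measure_ne_top _ s, hfin _ _⟩) (hfin _ _),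
    ENNReal.toReal_add (measure_ne_top _ s) (hfin _ _), ← measureReal_def, ← measureReal_def,
    ← measureReal_def, measureReal_restrict_apply hs, measureReal_ennreal_smul_apply,
    measureReal_ennreal_smul_apply, hatom, hatom, ENNReal.toReal_ofReal hp0,
    ENNReal.toReal_ofReal htail, ← measureReal_def]

lemma isProbabilityMeasure_Fp [IsProbabilityMeasure G] (hp0 : 0 ≤ p)
    (hp1 : p + G.real (Iio lam) ≤ 1) : IsProbabilityMeasure (Fp G lam M p) := by
  refine ⟨(ENNReal.toReal_eq_one_iff _).1 ?_⟩
  rw [← measureReal_def, Fp_real_apply hp0 hp1 MeasurableSet.univ, univ_inter]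
  simp only [indicator_univ, Pi.one_apply]
  ring

lemma Fp_apply_Iic_of_lt [IsProbabilityMeasure G] (hlM : lam ≤ M) (hp0 : 0 ≤ p)
    (hp1 : p + G.real (Iio lam) ≤ 1) {x : ℝ} (hx : x < lam) :
    Fp G lam M p (Iic x) = G (Iic x) := by
  have := isProbabilityMeasure_Fp (M := M) hp0 hp1
  rw [← measureReal_eq_measureReal_iff, Fp_real_apply hp0 hp1 measurableSet_Iic,
    inter_eq_left.2 (Iic_subset_Iio.2 hx)]
  simp [hx, hx.trans_le hlM]

lemma Fp_mem_ambig (hρ0 : 0 < ρ) (hρ1 : ρ < 1) (hlam : 0 ≤ lam) (hlM : lam ≤ M) (hp0 : 0 ≤ p)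
    (hp1 : p + G.real (Iio lam) ≤ 1) (hG : G ∈ GoodDist ρ M) :
    Fp G lam M p ∈ Ambig ρ M G lam := by
  obtain ⟨hGprob, hG0, hGint, -⟩ := hG
  have hprob := isProbabilityMeasure_Fp (M := M) hp0 hp1
  have hbelow : ∀ x < lam, Fp G lam M p (Iic x) = G (Iic x) :=
    fun x hx => Fp_apply_Iic_of_lt hlM hp0 hp1 hx
  refine ⟨⟨hprob, ?_, ?_, ?_⟩, hbelow⟩
  · rw [← measureReal_eq_zero_iff,
      measureReal_Iio_eq_of_forall_lt fun x hx => hbelow x (hx.trans_le hlam), measureReal_def,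
      hG0, ENNReal.toReal_zero]
  · have hatom (c a : ℝ) : Integrable id (ENNReal.ofReal c • Measure.dirac a) :=
      (integrable_dirac (by simp)).smul_measure ENNReal.ofReal_ne_top
    exact (hGint.restrict.add_measure (hatom _ _)).add_measure (hatom _ _)
  · rw [qStar_le_iff hρ0 hρ1, Fp_real_apply hp0 hp1 measurableSet_Iic,
      inter_eq_right.2 ((Iio_subset_Iio hlM).trans Iio_subset_Iic_self)]
    simp only [indicator, mem_Iic, hlM, le_refl, if_true, Pi.one_apply]
    linarith

end Ambiguity

section Regret

variable {b h ρ M lam : ℝ} {F G : Measure ℝ}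

lemma regret_le {q t : ℝ} (hG : G ∈ GoodDist ρ M)
    (H : ∀ F ∈ Ambig ρ M G lam, nvCost b h F q - nvCost b h F (qStar ρ F) ≤ t) :
    Regret b h ρ M G lam q ≤ t :=
  csSup_le (Nonempty.image _ ⟨G, self_mem_ambig hG⟩) (forall_mem_image.2 H)

variable (hb : 0 < b) (hh : 0 < h) (hρ : ρ = b / (b + h))
include hb hh hρ

lemma sub_le_regret (hF : F ∈ Ambig ρ M G lam) (q : ℝ) :
    nvCost b h F q - nvCost b h F (qStar ρ F) ≤ Regret b h ρ M G lam q := by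
  refine le_csSup ⟨(b + h) * (|q| + M), forall_mem_image.2 fun F hF => ?_⟩ ⟨F, hF, rfl⟩
  obtain ⟨⟨hprob, hF0, hFint, hFM⟩, -⟩ := hF
  have hq0 : 0 ≤ qStar ρ F :=
    qStar_nonneg (critRatio_pos hb hh hρ) (critRatio_lt_one hb hh hρ) hF0
  calc nvCost b h F q - nvCost b h F (qStar ρ F)
      ≤ (b + h) * |q - qStar ρ F| := nvCost_sub_le_mul_abs hb hh hρ hFint _ _
    _ ≤ (b + h) * (|q| + M) := by
        gcongr
        exact (abs_sub _ _).trans (by rwa [abs_of_nonneg hq0, add_le_add_iff_left])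

lemma regret_nonneg (q : ℝ) : 0 ≤ Regret b h ρ M G lam q := by
  refine Real.sSup_nonneg (forall_mem_image.2 fun F hF => ?_)
  have := hF.1.1
  exact sub_nonneg.2 (nvCost_qStar_le hb hh hρ hF.1.2.2.1 q)

lemma risk_nonneg : 0 ≤ Risk b h ρ M G lam :=
  Real.sInf_nonneg (forall_mem_image.2 fun q _ => regret_nonneg hb hh hρ q)

lemma regret_le_of_near_quantile {q t : ℝ} (hG : G ∈ GoodDist ρ M) (hg : ρ ≤ G.real (Iio lam))
    (ht : 0 ≤ t) (hq0 : 0 ≤ q) (hq : q ≤ lam) (hIio : G.real (Iio q) ≤ ρ + t)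
    (hIic : q < lam → ρ - t ≤ G.real (Iic q)) :
    Regret b h ρ M G lam q ≤ lam * (b + h) * t := by
  refine regret_le hG fun F hF => ?_
  have hρ0 := critRatio_pos hb hh hρ
  have hρ1 := critRatio_lt_one hb hh hρ
  have hGprob := hG.1
  have hqF := qStar_le_of_mem_ambig hρ0 hρ1 hg hF
  have hFG := measureReal_Iio_eq_of_mem_ambig hF hq
  obtain ⟨⟨hFprob, hF0, hFint, -⟩, hFlam⟩ := hF
  have hqF0 := qStar_nonneg hρ0 hρ1 hF0
  rcases lt_or_ge q (qStar ρ F) with hlt | hle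
  · have hqlam : q < lam := hlt.trans_le hqF
    have hFq : F.real (Iic q) = G.real (Iic q) := congrArg ENNReal.toReal (hFlam q hqlam)
    have : 0 ≤ qStar ρ F - q := sub_nonneg.2 hlt.le
    calc nvCost b h F q - nvCost b h F (qStar ρ F)
        ≤ (b + h) * ((qStar ρ F - q) * (ρ - F.real (Iic q))) :=
          nvCost_sub_le_Iic hb hh hρ hFint _ _
      _ ≤ (b + h) * ((qStar ρ F - q) * t) := by
          gcongr
          linarith [hIic hqlam]
      _ ≤ (b + h) * (lam * t) := by
          gcongr
          linarith
      _ = lam * (b + h) * t := by ring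
  · have : 0 ≤ q - qStar ρ F := sub_nonneg.2 hle
    calc nvCost b h F q - nvCost b h F (qStar ρ F)
        ≤ (b + h) * ((q - qStar ρ F) * (F.real (Iio q) - ρ)) :=
          nvCost_sub_le_Iio hb hh hρ hFint _ _
      _ ≤ (b + h) * ((q - qStar ρ F) * t) := by
          gcongr
          linarith
      _ ≤ (b + h) * (lam * t) := by
          gcongr
          linarith
      _ = lam * (b + h) * t := by ring

end Regret

section Unidentifiable

variable {b h ρ M lam γ g q x : ℝ} {G : Measure ℝ}

/-- The worst-case regret of `q`, in units of `b + h`, when mass `γ < ρ` lies below the boundary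
`lam`: the worst demand distributions place all the remaining mass at `lam` or all of it at `M`. -/
def tailRegret (ρ M lam γ q : ℝ) : ℝ :=
  max ((1 - ρ) * (q - lam)) ((ρ - γ) * (M - q))

/-- The quantity at which the two branches of `tailRegret` with mass `γ` below the boundary agree.
It is `qDagger` for the true mass `γ = G⁻(λ)` and an output of the algorithm for `γ = Ĝ⁻(λ)`. -/
noncomputable def balancePoint (b h M lam γ : ℝ) : ℝ :=
  (b * M + h * lam - (b + h) * γ * M) / ((b + h) * (1 - γ))

lemma tailRegret_le_of_balanced (hρ1 : ρ ≤ 1) (hg : g ≤ ρ) (hx : x ∈ Icc lam M)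
    (hbal : (1 - ρ) * (x - lam) = (ρ - γ) * (M - x)) (q : ℝ) :
    tailRegret ρ M lam g x ≤ tailRegret ρ M lam g q + (M - lam) * |γ - g| := by
  obtain ⟨hlx, hxM⟩ := hx
  have hover := le_max_left ((1 - ρ) * (q - lam)) ((ρ - g) * (M - q))
  have hunder := le_max_right ((1 - ρ) * (q - lam)) ((ρ - g) * (M - q))
  have hdrift : |(M - x) * (γ - g)| ≤ (M - lam) * |γ - g| := by
    rw [abs_mul, abs_of_nonneg (sub_nonneg.2 hxM)]
    gcongr
  obtain ⟨hdrift_neg, hdrift_pos⟩ := abs_le.1 hdrift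
  unfold tailRegret
  rcases le_total q x with hqx | hxq
  · have hmono : (ρ - g) * (M - x) ≤ (ρ - g) * (M - q) := by
      gcongr
    exact max_le (by linarith) (by linarith [abs_nonneg ((M - x) * (γ - g))])
  · have hmono : (1 - ρ) * (x - lam) ≤ (1 - ρ) * (q - lam) := by
      gcongr
    exact max_le (by linarith [abs_nonneg ((M - x) * (γ - g))]) (by linarith)

variable (hb : 0 < b) (hh : 0 < h) (hρ : ρ = b / (b + h))
include hb hh hρ

lemma balancePoint_balanced (hγ : γ < 1) :
    (1 - ρ) * (balancePoint b h M lam γ - lam) = (ρ - γ) * (M - balancePoint b h M lam γ) := by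
  have hγ' : 1 - γ ≠ 0 := (sub_pos.2 hγ).ne'
  have hbh : b + h ≠ 0 := by positivity
  rw [balancePoint, hρ]
  field_simp
  ring

lemma balancePoint_mem_Icc (hlM : lam ≤ M) (hγ : γ ≤ ρ) : balancePoint b h M lam γ ∈ Icc lam M := by
  have hρ1 := critRatio_lt_one hb hh hρ
  have hγ1 : 0 < 1 - γ := by linarith
  have hbal := balancePoint_balanced (M := M) (lam := lam) hb hh hρ (hγ.trans_lt hρ1)
  have hlower : (1 - γ) * (balancePoint b h M lam γ - lam) = (ρ - γ) * (M - lam) := by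
    linear_combination hbal
  have hupper : (1 - γ) * (M - balancePoint b h M lam γ) = (1 - ρ) * (M - lam) := by
    linear_combination -hbal
  constructor
  · refine sub_nonneg.1 (nonneg_of_mul_nonneg_right (hlower.symm ▸ ?_) hγ1)
    exact mul_nonneg (sub_nonneg.2 hγ) (sub_nonneg.2 hlM)
  · refine sub_nonneg.1 (nonneg_of_mul_nonneg_right (hupper.symm ▸ ?_) hγ1)
    exact mul_nonneg (sub_nonneg.2 hρ1.le) (sub_nonneg.2 hlM)

lemma regret_le_tailRegret (hG : G ∈ GoodDist ρ M) (hg : G.real (Iio lam) < ρ) (hlq : lam ≤ q) :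
    Regret b h ρ M G lam q ≤ (b + h) * tailRegret ρ M lam (G.real (Iio lam)) q := by
  refine regret_le hG fun F hF => ?_
  have hρ1 := critRatio_lt_one hb hh hρ
  have hGprob := hG.1
  have hlamF := le_qStar_of_mem_ambig hρ1 hg hF
  have hFlam := measureReal_Iio_eq_of_mem_ambig hF le_rfl
  obtain ⟨⟨hFprob, -, hFint, hFM⟩, -⟩ := hF
  rcases le_total q (qStar ρ F) with hle | hle
  · have hmass : G.real (Iio lam) ≤ F.real (Iic q) :=
      hFlam.symm.trans_le (measureReal_mono ((Iio_subset_Iio hlq).trans Iio_subset_Iic_self))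
    refine (nvCost_sub_le_Iic hb hh hρ hFint _ _).trans ?_
    rw [mul_comm (qStar ρ F - q)]
    gcongr
    exact le_max_of_le_right (mul_le_mul (by linarith) (by linarith) (by linarith) (by linarith))
  · have hmass : F.real (Iio q) ≤ 1 := measureReal_le_one
    refine (nvCost_sub_le_Iio hb hh hρ hFint _ _).trans ?_
    rw [mul_comm (q - qStar ρ F)]
    gcongr
    exact le_max_of_le_left (mul_le_mul (by linarith) (by linarith) (by linarith) (by linarith))

lemma overage_le_regret (hlam : 0 ≤ lam) (hG : G ∈ GoodDist ρ M)
    (hg : G.real (Iio lam) < ρ) (q : ℝ) :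
    (b + h) * ((1 - ρ) * (q - lam)) ≤ Regret b h ρ M G lam q := by
  have hρ0 := critRatio_pos hb hh hρ
  have hρ1 := critRatio_lt_one hb hh hρ
  have hlM := boundary_le_of_mem_goodDist hρ1 hG hg
  have hGprob := hG.1
  have hp0 : 0 ≤ 1 - G.real (Iio lam) := by linarith
  have hp1 : 1 - G.real (Iio lam) + G.real (Iio lam) ≤ 1 := by linarith
  have hF := Fp_mem_ambig hρ0 hρ1 hlam hlM hp0 hp1 hG
  have hIic := Fp_real_apply (M := M) hp0 hp1 (measurableSet_Iic (a := lam))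
  set F := Fp G lam M (1 - G.real (Iio lam))
  have hFprob : IsProbabilityMeasure F := hF.1.1
  have hIio : F.real (Iio lam) < ρ := (measureReal_Iio_eq_of_mem_ambig hF le_rfl).trans_lt hg
  replace hIic : F.real (Iic lam) = 1 := by
    rw [hIic, inter_eq_right.2 Iio_subset_Iic_self, indicator_of_mem self_mem_Iic, Pi.one_apply]
    ring
  have hquantile : qStar ρ F = lam := qStar_eq_of_measureReal hρ0 hρ1 hIio (hIic ▸ hρ1.le)
  have hregret := sub_le_regret hb hh hρ hF q
  have hcost := nvCost_sub_le_Iic hb hh hρ hF.1.2.2.1 lam q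
  rw [hquantile] at hregret
  rw [hIic] at hcost
  linarith

lemma underage_le_regret (hlam : 0 ≤ lam) (hG : G ∈ GoodDist ρ M)
    (hg : G.real (Iio lam) < ρ) (q : ℝ) :
    (b + h) * ((ρ - G.real (Iio lam)) * (M - q)) ≤ Regret b h ρ M G lam q := by
  have hρ0 := critRatio_pos hb hh hρ
  have hρ1 := critRatio_lt_one hb hh hρ
  have hlM := boundary_le_of_mem_goodDist hρ1 hG hg
  have hGprob := hG.1
  have hp1 : 0 + G.real (Iio lam) ≤ 1 := by linarith
  have hF := Fp_mem_ambig hρ0 hρ1 hlam hlM le_rfl hp1 hG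
  have hIio := Fp_real_apply (M := M) le_rfl hp1 (measurableSet_Iio (a := M))
  set F := Fp G lam M 0
  have hFprob : IsProbabilityMeasure F := hF.1.1
  replace hIio : F.real (Iio M) = G.real (Iio lam) := by
    rw [hIio, inter_eq_right.2 (Iio_subset_Iio hlM), indicator_of_notMem self_notMem_Iio]
    ring
  have hquantile : qStar ρ F = M :=
    le_antisymm hF.1.2.2.2 (le_qStar_of_measureReal_Iio_lt hρ1 (hIio.trans_lt hg))
  have hregret := sub_le_regret hb hh hρ hF q
  have hcost := nvCost_sub_le_Iio hb hh hρ hF.1.2.2.1 M q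
  rw [hquantile] at hregret
  rw [hIio] at hcost
  linarith

lemma tailRegret_le_regret (hlam : 0 ≤ lam) (hG : G ∈ GoodDist ρ M)
    (hg : G.real (Iio lam) < ρ) (q : ℝ) :
    (b + h) * tailRegret ρ M lam (G.real (Iio lam)) q ≤ Regret b h ρ M G lam q := by
  rw [tailRegret, mul_max_of_nonneg _ _ (by positivity)]
  exact max_le (overage_le_regret hb hh hρ hlam hG hg q)
    (underage_le_regret hb hh hρ hlam hG hg q)

lemma regret_balancePoint_le (hlam : 0 ≤ lam) (hG : G ∈ GoodDist ρ M)
    (hg : G.real (Iio lam) < ρ) (hγ : γ ≤ ρ) :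
    Regret b h ρ M G lam (balancePoint b h M lam γ) ≤
      Risk b h ρ M G lam + (M - lam) * (b + h) * |γ - G.real (Iio lam)| := by
  have hρ1 := critRatio_lt_one hb hh hρ
  have hlM := boundary_le_of_mem_goodDist hρ1 hG hg
  have hmem := balancePoint_mem_Icc hb hh hρ hlM hγ
  have hbal := balancePoint_balanced (M := M) (lam := lam) hb hh hρ (hγ.trans_lt hρ1)
  rw [← sub_le_iff_le_add]
  refine le_csInf (nonempty_Icc.2 (hlam.trans hlM) |>.image _) (forall_mem_image.2 fun q _ => ?_)
  rw [sub_le_iff_le_add]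
  calc Regret b h ρ M G lam (balancePoint b h M lam γ)
      ≤ (b + h) * tailRegret ρ M lam (G.real (Iio lam)) (balancePoint b h M lam γ) :=
        regret_le_tailRegret hb hh hρ hG hg hmem.1
    _ ≤ (b + h) * (tailRegret ρ M lam (G.real (Iio lam)) q +
          (M - lam) * |γ - G.real (Iio lam)|) := by
        gcongr
        exact tailRegret_le_of_balanced hρ1.le hg.le hmem hbal q
    _ = (b + h) * tailRegret ρ M lam (G.real (Iio lam)) q +
          (M - lam) * (b + h) * |γ - G.real (Iio lam)| := by ring
    _ ≤ Regret b h ρ M G lam q + (M - lam) * (b + h) * |γ - G.real (Iio lam)| := by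
        gcongr
        exact tailRegret_le_regret hb hh hρ hlam hG hg q

lemma regret_boundary_le (hG : G ∈ GoodDist ρ M) (hg : G.real (Iio lam) < ρ) :
    Regret b h ρ M G lam lam ≤ (M - lam) * (b + h) * (ρ - G.real (Iio lam)) := by
  have hlM := boundary_le_of_mem_goodDist (critRatio_lt_one hb hh hρ) hG hg
  refine (regret_le_tailRegret hb hh hρ hG hg le_rfl).trans_eq ?_
  rw [tailRegret, sub_self, mul_zero,
    max_eq_right (mul_nonneg (sub_nonneg.2 hg.le) (sub_nonneg.2 hlM))]
  ring

end Unidentifiable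

section CensoredSample

variable {ι : Type*} [Fintype ι] {ρ lam x : ℝ} {d : ι → ℝ}

/-- The `ρ`-quantile of the sample `d` censored at `lam`; the output of `qalg` when `ghat` is
large. -/
noncomputable def censoredQuantile (ρ lam : ℝ) (d : ι → ℝ) : ℝ :=
  qStar ρ (empMeasure fun i => min (d i) lam)

lemma ghat_eq_empMeasure_real {N : ℕ} (lam : ℝ) (d : Fin N → ℝ) :
    ghat lam d = (empMeasure d).real (Iio lam) := by
  rw [ghat, empMeasure_real_apply d measurableSet_Iio, Fintype.card_fin, one_div]
  simp [indicator_apply]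

lemma qalg_eq_ite (b h M lam ρ ζ : ℝ) {N : ℕ} (d : Fin N → ℝ) :
    qalg b h M lam ρ ζ d =
      if ρ + ζ ≤ (empMeasure d).real (Iio lam) then censoredQuantile ρ lam d
      else if (empMeasure d).real (Iio lam) < ρ - ζ then
        balancePoint b h M lam ((empMeasure d).real (Iio lam))
      else lam := by
  have hcdf (x : ℝ) : (1 / (N : ℝ)) * ∑ i, (if min (d i) lam ≤ x then (1 : ℝ) else 0) =
      (empMeasure fun i => min (d i) lam).real (Iic x) := by
    rw [empMeasure_real_apply _ measurableSet_Iic, Fintype.card_fin, one_div]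
    simp only [indicator_apply, mem_Iic, Pi.one_apply]
  simp only [qalg, hcdf, ghat_eq_empMeasure_real]
  rfl

variable [Nonempty ι]

lemma censoredQuantile_le (hρ0 : 0 < ρ) (hρ1 : ρ < 1) (hx : ρ ≤ (empMeasure d).real (Iic x)) :
    censoredQuantile ρ lam d ≤ x :=
  (qStar_le_iff hρ0 hρ1).2 (hx.trans (empMeasure_real_le measurableSet_Iic measurableSet_Iic
    fun i hi => (min_le_left (d i) lam).trans hi))

lemma censoredQuantile_le_boundary (hρ0 : 0 < ρ) (hρ1 : ρ < 1) :
    censoredQuantile ρ lam d ≤ lam := by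
  refine (qStar_le_iff hρ0 hρ1).2 (hρ1.le.trans ?_)
  rw [← probReal_univ (μ := empMeasure d)]
  exact empMeasure_real_le MeasurableSet.univ measurableSet_Iic fun i _ => min_le_right (d i) lam

lemma le_censoredQuantile (hρ1 : ρ < 1) (hx : x ≤ lam) (hIio : (empMeasure d).real (Iio x) < ρ) :
    x ≤ censoredQuantile ρ lam d :=
  le_qStar_of_measureReal_Iio_lt hρ1 ((empMeasure_real_le measurableSet_Iio measurableSet_Iio
    fun _ hi => (min_lt_iff.1 hi).resolve_right hx.not_gt).trans_lt hIio)

lemma censoredQuantile_nonneg (hρ0 : 0 < ρ) (hρ1 : ρ < 1) (hlam : 0 ≤ lam) (hd : ∀ i, 0 ≤ d i) :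
    0 ≤ censoredQuantile ρ lam d := by
  refine le_censoredQuantile hρ1 hlam (lt_of_le_of_lt ?_ hρ0)
  calc (empMeasure d).real (Iio 0) ≤ (empMeasure d).real ∅ :=
        empMeasure_real_le measurableSet_Iio MeasurableSet.empty fun i hi => (hd i).not_gt hi
    _ = 0 := measureReal_empty

end CensoredSample

section TypicalSample

variable {ι : Type*} [Fintype ι] {b h ρ M lam ζ : ℝ} {G : Measure ℝ} {d : ι → ℝ}

/-- The samples on which the algorithm succeeds: the empirical mass is `ζ`-close to the true mass
below `lam`, and on the relevant side at the quantiles of `G` of levels `ρ ± ζ`. The `lower`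
(`upper`) field is used only if `0 < ρ - ζ` (`ρ + ζ < 1`); otherwise `qStar` is a junk value. -/
structure IsTypicalSample (G : Measure ℝ) (ρ lam ζ : ℝ) (d : ι → ℝ) : Prop where
  nonneg : ∀ i, 0 ≤ d i
  boundary : |(empMeasure d).real (Iio lam) - G.real (Iio lam)| < ζ
  upper : G.real (Iic (qStar (ρ + ζ) G)) - ζ < (empMeasure d).real (Iic (qStar (ρ + ζ) G))
  lower : (empMeasure d).real (Iio (qStar (ρ - ζ) G)) < G.real (Iio (qStar (ρ - ζ) G)) + ζ

lemma one_sub_le_measureReal_isTypicalSample [Nonempty ι] [IsProbabilityMeasure G]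
    (hG : G (Iio 0) = 0) (hζ : 0 ≤ ζ) :
    1 - 4 * Real.exp (-2 * Fintype.card ι * ζ ^ 2) ≤
      (Measure.pi fun _ : ι => G).real {d | IsTypicalSample G ρ lam ζ d} := by
  let A : Fin 4 → Set ℝ :=
    ![Iio lam, (Iio lam)ᶜ, (Iic (qStar (ρ + ζ) G))ᶜ, Iio (qStar (ρ - ζ) G)]
  have hA : ∀ k, MeasurableSet (A k) := by
    simp only [A, Fin.forall_fin_succ]
    measurability
  have hnonneg : ∀ᵐ d ∂(Measure.pi fun _ : ι => G), ∀ i, 0 ≤ d i :=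
    eventually_all.2 fun i => Measure.tendsto_eval_ae_ae.eventually
      ((measure_eq_zero_iff_ae_notMem.1 hG).mono fun _ hx => notMem_Iio.1 hx)
  have hprob := one_sub_le_measureReal_pi_forall_empMeasure_lt (ι := ι) G hA hζ
  rw [Fintype.card_fin, Nat.cast_ofNat] at hprob
  refine hprob.trans (ENNReal.toReal_mono (measure_ne_top _ _) (measure_mono_ae ?_))
  filter_upwards [hnonneg] with d hd hdev
  have hcompl (s : Set ℝ) (hs : MeasurableSet s) (H : (empMeasure d).real sᶜ < G.real sᶜ + ζ) :
      G.real s - ζ < (empMeasure d).real s := by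
    rw [probReal_compl_eq_one_sub hs, probReal_compl_eq_one_sub hs] at H
    linarith
  have hboundary := hcompl _ measurableSet_Iio (hdev 1)
  exact ⟨hd, abs_sub_lt_iff.2 ⟨sub_lt_iff_lt_add'.2 (hdev 0), by linarith⟩,
    hcompl _ measurableSet_Iic (hdev 2), hdev 3⟩

namespace IsTypicalSample

lemma measureReal_Iio_censoredQuantile_le [Nonempty ι] [IsProbabilityMeasure G]
    (hd : IsTypicalSample G ρ lam ζ d) (hρ0 : 0 < ρ) (hρ1 : ρ < 1) (hζ : 0 ≤ ζ) :
    G.real (Iio (censoredQuantile ρ lam d)) ≤ ρ + ζ := by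
  rcases lt_or_ge (ρ + ζ) 1 with hlevel | hlevel
  · have hle : censoredQuantile ρ lam d ≤ qStar (ρ + ζ) G :=
      censoredQuantile_le hρ0 hρ1 (by linarith [hd.upper, le_measureReal_Iic_qStar (F := G) hlevel])
    exact (measureReal_mono (Iio_subset_Iio hle)).trans
      (measureReal_Iio_qStar_le (by linarith) hlevel)
  · exact measureReal_le_one.trans hlevel

lemma le_measureReal_Iic_censoredQuantile [Nonempty ι] [IsProbabilityMeasure G]
    (hd : IsTypicalSample G ρ lam ζ d) (hρ1 : ρ < 1) (hζ : 0 ≤ ζ) (hg : ρ ≤ G.real (Iio lam)) :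
    ρ - ζ ≤ G.real (Iic (censoredQuantile ρ lam d)) := by
  rcases lt_or_ge 0 (ρ - ζ) with hlevel | hlevel
  · have hlevel1 : ρ - ζ < 1 := by linarith
    have hle_lam : qStar (ρ - ζ) G ≤ lam := (qStar_le_iff hlevel hlevel1).2
      (by linarith [measureReal_mono (μ := G) (Iio_subset_Iic_self (a := lam))])
    have hle : qStar (ρ - ζ) G ≤ censoredQuantile ρ lam d := le_censoredQuantile hρ1 hle_lam
      (by linarith [hd.lower, measureReal_Iio_qStar_le (F := G) hlevel hlevel1])
    exact (qStar_le_iff hlevel hlevel1).1 hle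
  · exact hlevel.trans measureReal_nonneg

lemma regret_qalg_le_of_le {N : ℕ} [NeZero N] {d : Fin N → ℝ} (hd : IsTypicalSample G ρ lam ζ d)
    (hb : 0 < b) (hh : 0 < h) (hρ : ρ = b / (b + h)) (hlam : 0 ≤ lam) (hζ : 0 ≤ ζ)
    (hG : G ∈ GoodDist ρ M) (hg : ρ ≤ G.real (Iio lam)) :
    Regret b h ρ M G lam (qalg b h M lam ρ ζ d) ≤ rcnBound b h M lam ρ ζ (G.real (Iio lam)) := by
  have hρ0 := critRatio_pos hb hh hρ
  have hρ1 := critRatio_lt_one hb hh hρ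
  have hGprob := hG.1
  have hunit : 0 ≤ lam * (b + h) * ζ := by positivity
  have hγ_lower := (abs_lt.1 hd.boundary).1
  have hquantile : Regret b h ρ M G lam (censoredQuantile ρ lam d) ≤ lam * (b + h) * ζ :=
    regret_le_of_near_quantile hb hh hρ hG hg hζ
      (censoredQuantile_nonneg hρ0 hρ1 hlam hd.nonneg) (censoredQuantile_le_boundary hρ0 hρ1)
      (hd.measureReal_Iio_censoredQuantile_le hρ0 hρ1 hζ)
      fun _ => hd.le_measureReal_Iic_censoredQuantile hρ1 hζ hg
  rw [qalg_eq_ite, if_neg (by linarith : ¬ (empMeasure d).real (Iio lam) < ρ - ζ), rcnBound,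
    if_pos hg]
  split_ifs with hγ hg2 hg2
  · exact hquantile
  · linarith
  · linarith
  · have hboundary : Regret b h ρ M G lam lam ≤ lam * (b + h) * (2 * ζ) :=
      regret_le_of_near_quantile hb hh hρ hG hg (by positivity) hlam le_rfl (not_le.1 hg2).le
        fun hlt => absurd hlt (lt_irrefl lam)
    linarith

lemma regret_qalg_le_of_lt {N : ℕ} {d : Fin N → ℝ} (hd : IsTypicalSample G ρ lam ζ d)
    (hb : 0 < b) (hh : 0 < h) (hρ : ρ = b / (b + h)) (hlam : 0 ≤ lam) (hζ : 0 ≤ ζ)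
    (hG : G ∈ GoodDist ρ M) (hg : G.real (Iio lam) < ρ) :
    Regret b h ρ M G lam (qalg b h M lam ρ ζ d) ≤
      Risk b h ρ M G lam + rcnBound b h M lam ρ ζ (G.real (Iio lam)) := by
  have hlM := boundary_le_of_mem_goodDist (critRatio_lt_one hb hh hρ) hG hg
  obtain ⟨hγ_lower, hγ_upper⟩ := abs_lt.1 hd.boundary
  have hcoeff : 0 ≤ (M - lam) * (b + h) := mul_nonneg (sub_nonneg.2 hlM) (by positivity)
  have hunit : 0 ≤ (M - lam) * (b + h) * ζ := mul_nonneg hcoeff hζ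
  have hmax : (M - lam) * (b + h) * ζ ≤ max (b / h) 1 * ((M - lam) * (b + h) * ζ) :=
    le_mul_of_one_le_left hunit (le_max_right _ _)
  rw [qalg_eq_ite, if_neg (by linarith : ¬ ρ + ζ ≤ (empMeasure d).real (Iio lam)), rcnBound,
    if_neg (by linarith : ¬ ρ + 2 * ζ ≤ G.real (Iio lam)), if_neg hg.not_ge]
  by_cases hγ : (empMeasure d).real (Iio lam) < ρ - ζ
  · have hbalance := regret_balancePoint_le hb hh hρ hlam hG hg (hγ.le.trans (by linarith))
    have hdev := mul_le_mul_of_nonneg_left hd.boundary.le hcoeff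
    rw [if_pos hγ]
    split_ifs <;> linarith
  · have hboundary := regret_boundary_le hb hh hρ hG hg
    have hgap := mul_le_mul_of_nonneg_left
      (by linarith : ρ - G.real (Iio lam) ≤ 2 * ζ) hcoeff
    have hrisk : 0 ≤ Risk b h ρ M G lam := risk_nonneg hb hh hρ
    rw [if_neg hγ, if_pos (by linarith)]
    linarith

end IsTypicalSample

end TypicalSample

section SampleSize

lemma exp_neg_two_mul_sq_sqrt_log {N : ℕ} (hN : 1 ≤ N) {δ : ℝ} (hδ : δ ∈ Ioo (0 : ℝ) 1) :
    Real.exp (-2 * N * Real.sqrt (Real.log (2 / δ) / (2 * N)) ^ 2) = δ / 2 := by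
  have : (0 : ℝ) < N := Nat.cast_pos.2 hN
  have hδ2 : 1 ≤ 2 / δ := (one_le_div hδ.1).2 (by linarith [hδ.2])
  rw [Real.sq_sqrt (div_nonneg (Real.log_nonneg hδ2) (by positivity)),
    show -2 * N * (Real.log (2 / δ) / (2 * N)) = -Real.log (2 / δ) by field_simp,
    Real.exp_neg, Real.exp_log (zero_lt_one.trans_le hδ2), inv_div]

lemma iidPi_eq_pi (N : ℕ) (G : Measure ℝ) [SigmaFinite G] :
    iidPi N G = Measure.pi fun _ => G :=
  dif_pos ‹_›

end SampleSize

/-- with probability at least `1 - 2δ`, the worst-case regret of the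
RCN algorithm output is at most `Δ` plus the regime-dependent finite-sample term. -/
theorem stmt16 (b h M lam ρ : ℝ) (hb : 0 < b) (hh : 0 < h) (hM : 0 < M)
    (hlam : 0 ≤ lam) (hρ : ρ = b / (b + h))
    (G : Measure ℝ) (hG : G ∈ GoodDist ρ M)
    (hpath : (G (Iio lam)).toReal < ρ → lam < M)
    (N : ℕ) (hN : 1 ≤ N) (δ : ℝ) (hδ : δ ∈ Ioo (0 : ℝ) 1)
    (ζ : ℝ) (hζ : ζ = Real.sqrt (Real.log (2 / δ) / (2 * N))) :
    ENNReal.ofReal (1 - 2 * δ) ≤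
      iidPi N G {d : Fin N → ℝ |
        Regret b h ρ M G lam (qalg b h M lam ρ ζ d) ≤
          Risk b h ρ M G lam + rcnBound b h M lam ρ ζ ((G (Iio lam)).toReal)} := by
  have hGprob := hG.1
  have : NeZero N := ⟨Nat.one_le_iff_ne_zero.1 hN⟩
  have hζ0 : 0 ≤ ζ := hζ ▸ Real.sqrt_nonneg _
  have htail : Real.exp (-2 * N * ζ ^ 2) = δ / 2 := hζ ▸ exp_neg_two_mul_sq_sqrt_log hN hδ
  have htypical := one_sub_le_measureReal_isTypicalSample (ι := Fin N) (ρ := ρ) (lam := lam)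
    hG.2.1 hζ0
  rw [Fintype.card_fin, htail, show 1 - 4 * (δ / 2) = 1 - 2 * δ by ring] at htypical
  rw [iidPi_eq_pi]
  refine (ENNReal.ofReal_le_of_le_toReal htypical).trans (measure_mono fun d hd => ?_)
  rcases le_or_gt ρ (G.real (Iio lam)) with hg | hg
  · exact (hd.regret_qalg_le_of_le hb hh hρ hlam hζ0 hG hg).trans
      (le_add_of_nonneg_left (risk_nonneg hb hh hρ))
  · exact hd.regret_qalg_le_of_lt hb hh hρ hlam hζ0 hG hg
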